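/- arXiv:2210.11523 — 9 statements merged into one kernel-verified Lean document; each statement's English description precedes it below -/
import Mathlib

section
/- Let n ≥ 1, let λ ≠ 0 be real, let c : {−n, …, n} → ℂ, and define f : ℝ → ℂ by f(θ) = Σ_{k=−n}^{n} c_k · e^{i k λ θ}. Suppose ξ₁,…,ξ_n ∈ ℝ and β₁,…,β_n ∈ ℝ satisfy Σ_{j=1}^{n} ξ_j · sin(kλβ_j) = k/2 for every k ∈ {1,…,n}. Then for all θ ∈ ℝ, f′(θ) = λ · Σ_{j=1}^{n} ξ_j · (f(θ+β_j) − f(θ−β_j)). -/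
open Complex

/-- The generalised 2n-term parameter-shift rule for trigonometric polynomials of
degree at most `n` with frequency scale `λ`. -/
theorem general_shift_rule (n : ℕ) (hn : 1 ≤ n) (lam : ℝ) (hlam : lam ≠ 0)
    (c : ℤ → ℂ) (f : ℝ → ℂ)
    (hf : ∀ θ : ℝ, f θ = ∑ k ∈ Finset.Icc (-(n : ℤ)) (n : ℤ),
      c k * Complex.exp (I * k * lam * θ))
    (ξ β : Fin n → ℝ)
    (hsys : ∀ k ∈ Finset.Icc 1 n,
      ∑ j, ξ j * Real.sin (k * lam * β j) = (k : ℝ) / 2)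
    (θ : ℝ) :
    HasDerivAt f ((lam : ℂ) * ∑ j, (ξ j : ℂ) * (f (θ + β j) - f (θ - β j))) θ := by
  have h1 : ∀ k ∈ Finset.Icc (-(n : ℤ)) (n : ℤ),
      ∑ j, ξ j * Real.sin (k * lam * β j) = (k : ℝ) / 2 := by
    intro k hk
    rw [Finset.mem_Icc] at hk
    obtain ⟨m, rfl | rfl⟩ := Int.eq_nat_or_neg k
    · rcases Nat.eq_zero_or_pos m with rfl | hm
      · simp
      · have := hsys m (Finset.mem_Icc.2 ⟨hm, by omega⟩)
        simpa only [Int.cast_natCast] using this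
    · rcases Nat.eq_zero_or_pos m with rfl | hm
      · simp
      · have := hsys m (Finset.mem_Icc.2 ⟨hm, by omega⟩)
        push_cast
        simp only [neg_mul, Real.sin_neg, mul_neg, Finset.sum_neg_distrib, this]
        ring
  have h2 : ∀ (k : ℤ) (b : ℝ), Complex.exp (I * k * lam * ((θ + b : ℝ) : ℂ))
      - Complex.exp (I * k * lam * ((θ - b : ℝ) : ℂ))
      = Complex.exp (I * k * lam * θ) * (2 * I * ((Real.sin (k * lam * b) : ℝ) : ℂ)) := by
    intro k b
    have e1 : I * k * lam * ((θ + b : ℝ) : ℂ) = I * k * lam * θ + (k * lam * b : ℂ) * I := by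
      push_cast; ring
    have e2 : I * k * lam * ((θ - b : ℝ) : ℂ) = I * k * lam * θ + (-(k * lam * b) : ℂ) * I := by
      push_cast; ring
    rw [e1, e2, Complex.exp_add, Complex.exp_add, Complex.exp_mul_I, Complex.exp_mul_I,
      Complex.cos_neg, Complex.sin_neg]
    push_cast
    ring
  have h3 : HasDerivAt f (∑ k ∈ Finset.Icc (-(n : ℤ)) (n : ℤ),
      c k * (Complex.exp (I * k * lam * θ) * (I * k * lam))) θ := by
    rw [funext hf]
    refine HasDerivAt.fun_sum fun k _ => HasDerivAt.const_mul _ ?_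
    have := ((Complex.ofRealCLM.hasDerivAt (x := θ)).const_mul (I * k * lam)).cexp
    simpa using this
  convert h3 using 1
  simp only [hf, ← Finset.sum_sub_distrib, ← mul_sub, h2]
  simp only [Finset.mul_sum]
  rw [Finset.sum_comm]
  refine Finset.sum_congr rfl fun k hk => ?_
  have h4 : ∑ j, (ξ j : ℂ) * ((Real.sin (k * lam * β j) : ℝ) : ℂ) = (k : ℂ) / 2 := by
    have := congrArg (fun x : ℝ => (x : ℂ)) (h1 k hk)
    simp only [Complex.ofReal_sum, Complex.ofReal_mul, Complex.ofReal_div,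
      Complex.ofReal_intCast, Complex.ofReal_ofNat] at this
    exact this
  have h5 : (k : ℂ) = 2 * ∑ j, (ξ j : ℂ) * ((Real.sin (k * lam * β j) : ℝ) : ℂ) := by
    rw [h4]; ring
  calc _ = (c k * Complex.exp (I * k * lam * θ) * I * lam) *
        (2 * ∑ j, (ξ j : ℂ) * ((Real.sin (k * lam * β j) : ℝ) : ℂ)) := by
        simp only [Finset.mul_sum]
        refine Finset.sum_congr rfl fun j _ => ?_
        ring
    _ = _ := by rw [← h5]; ring
end

section
/- Let m, n ∈ ℕ and let ξ₁,…,ξ_m ∈ ℝ and α₁,…,α_m ∈ ℝ. The following are equivalent: (1) for every family of coefficients c : {−n,…,n} → ℂ, the function f(θ) = Σ_{k=−n}^{n} c_k e^{ikθ} satisfies f′(θ) = Σ_{j=1}^{m} ξ_j · f(θ + α_j) for all θ ∈ ℝ; (2) for every k ∈ {0, 1, …, n}, Σ_{j=1}^{m} ξ_j · e^{ikα_j} = k·i (as complex numbers). -/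
open Complex

lemma sr_deriv (n : ℕ) (c : ℤ → ℂ) (θ : ℝ) :
    HasDerivAt
        (fun θ : ℝ => ∑ k ∈ Finset.Icc (-(n : ℤ)) (n : ℤ), c k * Complex.exp (I * k * θ))
        (∑ k ∈ Finset.Icc (-(n : ℤ)) (n : ℤ), c k * (Complex.exp (I * k * θ) * (I * k))) θ := by
  refine HasDerivAt.fun_sum fun k _ => ?_
  have h : HasDerivAt (fun x : ℝ => I * (k : ℂ) * (x : ℂ)) (I * k) θ := by
    simpa using (Complex.ofRealCLM.hasDerivAt (x := θ)).const_mul (I * (k : ℂ))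
  exact h.cexp.const_mul _

/-- Characterisation of all `m`-term parameter-shift rules for trigonometric
polynomials of degree at most `n`. -/
theorem shift_rule_characterisation (m n : ℕ) (ξ α : Fin m → ℝ) :
    (∀ c : ℤ → ℂ, ∀ θ : ℝ,
      HasDerivAt
        (fun θ : ℝ => ∑ k ∈ Finset.Icc (-(n : ℤ)) (n : ℤ), c k * Complex.exp (I * k * θ))
        (∑ j, (ξ j : ℂ) *
          ∑ k ∈ Finset.Icc (-(n : ℤ)) (n : ℤ), c k * Complex.exp (I * k * (θ + α j))) θ)
    ↔ (∀ k : ℕ, k ≤ n →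
        ∑ j, (ξ j : ℂ) * Complex.exp (I * k * α j) = (k : ℂ) * I) := by
  constructor
  · intro h k hk
    have h1 := (h (fun l => if l = (k : ℤ) then 1 else 0) 0).unique
      (sr_deriv n (fun l => if l = (k : ℤ) then 1 else 0) 0)
    have hm : -(n : ℤ) ≤ k ∧ (k : ℤ) ≤ n := by omega
    simp only [ite_mul, one_mul, zero_mul, Finset.sum_ite_eq', Finset.mem_Icc, hm] at h1
    simpa [mul_comm] using h1
  · intro h c θ
    have key : ∀ k ∈ Finset.Icc (-(n : ℤ)) (n : ℤ),
        ∑ j, (ξ j : ℂ) * Complex.exp (I * k * α j) = I * k := by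
      intro k hk
      rw [Finset.mem_Icc] at hk
      have h2 := h k.natAbs (by omega)
      rcases Int.natAbs_eq k with e | e
      · have e2 : (k : ℂ) = (k.natAbs : ℂ) := by
          conv_lhs => rw [e]
          simp
        rw [e2, h2, mul_comm]
      · have e2 : (k : ℂ) = -(k.natAbs : ℂ) := by
          conv_lhs => rw [e]
          push_cast
          simp
        have h3 := congrArg (starRingEnd ℂ) h2
        rw [map_sum] at h3
        simp only [map_mul, ← Complex.exp_conj, Complex.conj_ofReal, Complex.conj_I,
          map_natCast] at h3
        rw [e2]
        have e3 : I * -(k.natAbs : ℂ) = (k.natAbs : ℂ) * -I := by ring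
        refine Eq.trans ?_ (h3.trans e3.symm)
        refine Finset.sum_congr rfl fun j _ => ?_
        congr 2
        ring
    convert sr_deriv n c θ using 1
    simp_rw [Finset.mul_sum]
    rw [Finset.sum_comm]
    refine Finset.sum_congr rfl fun k hk => ?_
    have h4 : ∀ a : ℂ, c k * (a * (I * k)) =
        c k * (a * ∑ j, (ξ j : ℂ) * Complex.exp (I * k * α j)) := fun a => by rw [key k hk]
    rw [h4, Finset.mul_sum, Finset.mul_sum]
    refine Finset.sum_congr rfl fun j _ => ?_
    rw [mul_add, Complex.exp_add]
    ring
end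

section
/- Define D(θ) to be the diagonal 4×4 complex matrix diag(1, 1, e^{−iθ}, e^{iθ}) (i.e. CR_Z(2θ)) and let U(θ) = D(θ) ⊗ conj(D(θ)) be the 16×16 Kronecker product of D(θ) with its entrywise complex conjugate. Then there do not exist real numbers ξ₁, ξ₂, ξ₃ and real shifts s₁, s₂, s₃ such that for all θ ∈ ℝ every entry of U is differentiable with (d/dθ)U(θ) = ξ₁·U(θ+s₁) + ξ₂·U(θ+s₂) + ξ₃·U(θ+s₃) (entrywise). -/
open Matrix Complex Kronecker

/-- `CR_Z(2θ) = diag(1, 1, e^{−iθ}, e^{iθ})`. -/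
noncomputable def CRZ2 (θ : ℝ) : Matrix (Fin 4) (Fin 4) ℂ :=
  Matrix.diagonal ![1, 1, Complex.exp (-(θ : ℂ) * I), Complex.exp ((θ : ℂ) * I)]

/-- The doubled gate `U(θ) = CR_Z(2θ) ⊗ conj(CR_Z(2θ))`. -/
noncomputable def doubledCRZ (θ : ℝ) : Matrix (Fin 4 × Fin 4) (Fin 4 × Fin 4) ℂ :=
  CRZ2 θ ⊗ₖ (CRZ2 θ).map (starRingEnd ℂ)

theorem alg_aux (a b c x y z u v w : ℂ) (hx : x * u = 1) (hy : y * v = 1) (hz : z * w = 1)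
    (h0 : a + b + c = 0) (h1 : a * x + b * y + c * z = I)
    (h2 : a * x ^ 2 + b * y ^ 2 + c * z ^ 2 = 2 * I)
    (g1 : a * u + b * v + c * w = -I)
    (g2 : a * u ^ 2 + b * v ^ 2 + c * w ^ 2 = -2 * I) : False := by
  have A : x - (x + y + z) + (x * y + y * z + z * x) * u - x * y * z * u ^ 2 = 0 := by
    linear_combination (y + z - y * z * u) * hx
  have B : y - (x + y + z) + (x * y + y * z + z * x) * v - x * y * z * v ^ 2 = 0 := by
    linear_combination (x + z - x * z * v) * hy
  have C : z - (x + y + z) + (x * y + y * z + z * x) * w - x * y * z * w ^ 2 = 0 := by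
    linear_combination (y + x - y * x * w) * hz
  have A' : x ^ 2 - (x + y + z) * x + (x * y + y * z + z * x) - x * y * z * u = 0 := by
    linear_combination (-y * z) * hx
  have B' : y ^ 2 - (x + y + z) * y + (x * y + y * z + z * x) - x * y * z * v = 0 := by
    linear_combination (-x * z) * hy
  have C' : z ^ 2 - (x + y + z) * z + (x * y + y * z + z * x) - x * y * z * w = 0 := by
    linear_combination (-y * x) * hz
  have E1 : 1 - (x * y + y * z + z * x) + 2 * (x * y * z) = 0 := by
    refine mul_left_cancel₀ I_ne_zero (?_ : I * _ = I * 0)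
    linear_combination a * A + b * B + c * C - h1 + (x + y + z) * h0
      - (x * y + y * z + z * x) * g1 + x * y * z * g2
  have E2 : 2 - (x + y + z) + x * y * z = 0 := by
    refine mul_left_cancel₀ I_ne_zero (?_ : I * _ = I * 0)
    linear_combination a * A' + b * B' + c * C' - h2 + (x + y + z) * h1
      - (x * y + y * z + z * x) * h0 + x * y * z * g1
  have Q : (1 - x) * ((1 - y) * (1 - z)) = 0 := by linear_combination -E1 + E2
  have Q' : (1 - x) * (1 - y) + (1 - y) * (1 - z) + (1 - z) * (1 - x) = 0 := by
    linear_combination 2 * E2 - E1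
  have S : a * (1 - x) + b * (1 - y) + c * (1 - z) = -I := by linear_combination h0 - h1
  have T : a * (1 - x) ^ 2 + b * (1 - y) ^ 2 + c * (1 - z) ^ 2 = 0 := by
    linear_combination h0 - 2 * h1 + h2
  have key : ∀ c p : ℂ, c * p = -I → c * p ^ 2 = 0 → False := by
    intro c p h h'
    have : c * p = 0 := by
      rcases mul_eq_zero.1 h' with h' | h'
      · simp [h']
      · simp [pow_eq_zero_iff (two_ne_zero) |>.1 h']
    rw [this] at h
    exact I_ne_zero (by linear_combination h)
  generalize 1 - x = p at *
  generalize 1 - y = q at *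
  generalize 1 - z = r at *
  rcases mul_eq_zero.1 Q with h | h
  · subst h
    have : q * r = 0 := by linear_combination Q'
    rcases mul_eq_zero.1 this with h | h <;> subst h
    · exact key c r (by linear_combination S) (by linear_combination T)
    · exact key b q (by linear_combination S) (by linear_combination T)
  · rcases mul_eq_zero.1 h with h | h <;> subst h
    · have : p * r = 0 := by linear_combination Q'
      rcases mul_eq_zero.1 this with h | h <;> subst h
      · exact key c r (by linear_combination S) (by linear_combination T)
      · exact key a p (by linear_combination S) (by linear_combination T)
    · have : p * q = 0 := by linear_combination Q'
      rcases mul_eq_zero.1 this with h | h <;> subst h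
      · exact key b q (by linear_combination S) (by linear_combination T)
      · exact key a p (by linear_combination S) (by linear_combination T)

theorem deriv_aux (k : ℂ) : HasDerivAt (fun t : ℝ => Complex.exp ((t : ℂ) * k)) k 0 := by
  have h := ((Complex.ofRealCLM.hasDerivAt (x := (0 : ℝ))).mul_const k).cexp
  simpa using h

/-- The doubled `CR_Z` gate admits no three-term parameter-shift rule. -/
theorem no_three_term_shift_rule_for_doubled_CRZ :
    ¬ ∃ (ξ₁ ξ₂ ξ₃ s₁ s₂ s₃ : ℝ),
      ∀ (θ : ℝ) (p q : Fin 4 × Fin 4),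
        HasDerivAt (fun t : ℝ => doubledCRZ t p q)
          ((ξ₁ : ℂ) * doubledCRZ (θ + s₁) p q +
           (ξ₂ : ℂ) * doubledCRZ (θ + s₂) p q +
           (ξ₃ : ℂ) * doubledCRZ (θ + s₃) p q) θ := by
  rintro ⟨a, b, c, s₁, s₂, s₃, H⟩
  have e0 : ∀ t, doubledCRZ t (0, 0) (0, 0) = Complex.exp ((t : ℂ) * 0) := by
    intro t; simp [doubledCRZ, CRZ2]
  have e1 : ∀ t, doubledCRZ t (3, 0) (3, 0) = Complex.exp ((t : ℂ) * I) := by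
    intro t; simp [doubledCRZ, CRZ2]
  have e2 : ∀ t, doubledCRZ t (2, 0) (2, 0) = Complex.exp ((t : ℂ) * (-I)) := by
    intro t; simp [doubledCRZ, CRZ2]
  have e3 : ∀ t, doubledCRZ t (3, 2) (3, 2) = Complex.exp ((t : ℂ) * (2 * I)) := by
    intro t; simp [doubledCRZ, CRZ2, ← Complex.exp_conj, ← Complex.exp_add]; ring_nf
  have e4 : ∀ t, doubledCRZ t (2, 3) (2, 3) = Complex.exp ((t : ℂ) * (-2 * I)) := by
    intro t; simp [doubledCRZ, CRZ2, ← Complex.exp_conj, ← Complex.exp_add]; ring_nf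
  have h0 := H 0 (0, 0) (0, 0)
  have h1 := H 0 (3, 0) (3, 0)
  have h2 := H 0 (2, 0) (2, 0)
  have h3 := H 0 (3, 2) (3, 2)
  have h4 := H 0 (2, 3) (2, 3)
  simp only [e0, zero_add] at h0
  simp only [e1, zero_add] at h1
  simp only [e2, zero_add] at h2
  simp only [e3, zero_add] at h3
  simp only [e4, zero_add] at h4
  replace h0 := h0.unique (deriv_aux _)
  replace h1 := h1.unique (deriv_aux _)
  replace h2 := h2.unique (deriv_aux _)
  replace h3 := h3.unique (deriv_aux _)
  replace h4 := h4.unique (deriv_aux _)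
  have sq : ∀ (s : ℝ), Complex.exp ((s : ℂ) * (2 * I)) = Complex.exp ((s : ℂ) * I) ^ 2 := by
    intro s; rw [← Complex.exp_nat_mul]; push_cast; ring_nf
  have sq' : ∀ (s : ℝ), Complex.exp ((s : ℂ) * (-2 * I)) = Complex.exp ((s : ℂ) * (-I)) ^ 2 := by
    intro s; rw [← Complex.exp_nat_mul]; push_cast; ring_nf
  have inv : ∀ (s : ℝ), Complex.exp ((s : ℂ) * I) * Complex.exp ((s : ℂ) * (-I)) = 1 := by
    intro s; rw [← Complex.exp_add]; simp
  simp only [sq] at h3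
  simp only [sq'] at h4
  simp only [mul_zero, Complex.exp_zero, mul_one] at h0
  exact alg_aux a b c _ _ _ _ _ _ (inv s₁) (inv s₂) (inv s₃) h0 h1 h3 h2 h4
end

section
/- In the setting of the single-layer Sim₁ ansatz on n qubits with Pauli labels P : {1,…,n} → {X, Y, Z, I}, state ψ(θ¹,θ²), Pauli-string Hamiltonian H, and expectation f(θ¹,θ²) = ⟨ψ, Hψ⟩ as above, let m = #{ j : P_j ≠ I } be the number of measured (non-identity) qubits. Then for every i ∈ {1,…,n}, the average of (∂f/∂θ¹_i)² over (θ¹,θ²) uniformly distributed on [−π,π]^{2n} is at most (1/2)^m, and likewise the average of (∂f/∂θ²_i)² is at most (1/2)^m. In particular, if a proportion Θ(n) of the qubits are measured, the gradient variance vanishes exponentially in n (a barren plateau). -/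
open Matrix Complex MeasureTheory

namespace Sim1

/-- Pauli labels. -/
inductive Pauli | X | Y | Z | I
  deriving DecidableEq

/-- The 2×2 Pauli matrices. -/
noncomputable def Pauli.mat : Pauli → Matrix (Fin 2) (Fin 2) ℂ
  | .X => !![0, 1; 1, 0]
  | .Y => !![0, -Complex.I; Complex.I, 0]
  | .Z => !![1, 0; 0, -1]
  | .I => !![1, 0; 0, 1]

/-- The rotation gate `R_X(a)`. -/
noncomputable def RX (a : ℝ) : Matrix (Fin 2) (Fin 2) ℂ :=
  !![(Real.cos (a / 2) : ℂ), -Complex.I * (Real.sin (a / 2) : ℂ);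
     -Complex.I * (Real.sin (a / 2) : ℂ), (Real.cos (a / 2) : ℂ)]

/-- The rotation gate `R_Z(b) = diag(e^{−ib/2}, e^{ib/2})`. -/
noncomputable def RZ (b : ℝ) : Matrix (Fin 2) (Fin 2) ℂ :=
  !![Complex.exp (-((b / 2 : ℝ) : ℂ) * Complex.I), 0;
     0, Complex.exp (((b / 2 : ℝ) : ℂ) * Complex.I)]

/-- The `n`-qubit state of a single layer of the Sim₁ ansatz:
`ψ(x) = ∏_j (R_Z(θ²_j) R_X(θ¹_j))_{x_j, 0}`. -/
noncomputable def psi (n : ℕ) (θ1 θ2 : Fin n → ℝ) : (Fin n → Fin 2) → ℂ :=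
  fun x => ∏ j, (RZ (θ2 j) * RX (θ1 j)) (x j) 0

/-- The Pauli-string Hamiltonian `H(x,y) = ∏_j (P_j)_{x_j, y_j}`. -/
noncomputable def ham (n : ℕ) (P : Fin n → Pauli) :
    Matrix (Fin n → Fin 2) (Fin n → Fin 2) ℂ :=
  Matrix.of fun x y => ∏ j, (P j).mat (x j) (y j)

/-- The (real) expectation value `f(θ¹,θ²) = ⟨ψ, Hψ⟩`. -/
noncomputable def f (n : ℕ) (P : Fin n → Pauli) (θ1 θ2 : Fin n → ℝ) : ℝ :=
  (star (psi n θ1 θ2) ⬝ᵥ (ham n P *ᵥ psi n θ1 θ2)).re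

/-- The average of a function of the parameters `(θ¹, θ²)` uniformly
distributed on `[−π,π]^{2n}`. -/
noncomputable def avg (n : ℕ) (g : (Fin n → ℝ) × (Fin n → ℝ) → ℝ) : ℝ :=
  (1 / (2 * Real.pi) ^ (2 * n)) *
    ∫ θ in ((Set.univ.pi fun _ : Fin n => Set.Icc (-Real.pi) Real.pi) ×ˢ
            (Set.univ.pi fun _ : Fin n => Set.Icc (-Real.pi) Real.pi)), g θ

/-- The squared partial derivative `(∂f/∂θ¹_i)²`. -/
noncomputable def gradSq1 (n : ℕ) (P : Fin n → Pauli) (i : Fin n) :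
    (Fin n → ℝ) × (Fin n → ℝ) → ℝ :=
  fun θ => (deriv (fun t => f n P (Function.update θ.1 i t) θ.2) (θ.1 i)) ^ 2

/-- The squared partial derivative `(∂f/∂θ²_i)²`. -/
noncomputable def gradSq2 (n : ℕ) (P : Fin n → Pauli) (i : Fin n) :
    (Fin n → ℝ) × (Fin n → ℝ) → ℝ :=
  fun θ => (deriv (fun t => f n P θ.1 (Function.update θ.2 i t)) (θ.2 i)) ^ 2


noncomputable def uu : Pauli → ℝ → ℝ
  | .X => fun a => Real.sin a
  | .Y => fun a => Real.sin a
  | .Z => fun a => Real.cos a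
  | .I => fun _ => 1

noncomputable def vv : Pauli → ℝ → ℝ
  | .X => fun a => Real.sin a
  | .Y => fun a => -Real.cos a
  | .Z => fun _ => 1
  | .I => fun _ => 1

noncomputable def uu' : Pauli → ℝ → ℝ
  | .X => fun a => Real.cos a
  | .Y => fun a => Real.cos a
  | .Z => fun a => -Real.sin a
  | .I => fun _ => 0

noncomputable def vv' : Pauli → ℝ → ℝ
  | .X => fun a => Real.cos a
  | .Y => fun a => Real.sin a
  | .Z => fun _ => 0
  | .I => fun _ => 0

lemma hasDeriv_uu (p : Pauli) (a : ℝ) : HasDerivAt (uu p) (uu' p a) a := by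
  cases p
  · exact Real.hasDerivAt_sin a
  · exact Real.hasDerivAt_sin a
  · exact Real.hasDerivAt_cos a
  · exact hasDerivAt_const a 1

lemma hasDeriv_vv (p : Pauli) (a : ℝ) : HasDerivAt (vv p) (vv' p a) a := by
  cases p
  · exact Real.hasDerivAt_sin a
  · have := (Real.hasDerivAt_cos a).neg
    rw [neg_neg] at this
    exact this
  · exact hasDerivAt_const a 1
  · exact hasDerivAt_const a 1

lemma single (p : Pauli) (a b : ℝ) :
    (∑ s, star ((RZ b * RX a) s 0) * ∑ t, p.mat s t * (RZ b * RX a) t 0)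
      = ((uu p a * vv p b : ℝ) : ℂ) := by
  have ha : a = 2 * (a / 2) := by ring
  have hb : b = 2 * (b / 2) := by ring
  have e1 : Complex.exp (-((b / 2 : ℝ) : ℂ) * Complex.I)
      = ((Real.cos (b/2) : ℝ) : ℂ) - ((Real.sin (b/2) : ℝ) : ℂ) * Complex.I := by
    rw [Complex.exp_mul_I, Complex.cos_neg, Complex.sin_neg]; push_cast; ring
  have e2 : Complex.exp (((b / 2 : ℝ) : ℂ) * Complex.I)
      = ((Real.cos (b/2) : ℝ) : ℂ) + ((Real.sin (b/2) : ℝ) : ℂ) * Complex.I := by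
    rw [Complex.exp_mul_I]; push_cast; ring
  have hsa : Real.sin a = 2 * Real.sin (a/2) * Real.cos (a/2) := by
    rw [← Real.sin_two_mul, ← ha]
  have hca : Real.cos a = Real.cos (a/2) * Real.cos (a/2) - Real.sin (a/2) * Real.sin (a/2) := by
    rw [← sq, ← sq, ← Real.cos_two_mul', ← ha]
  have hsb : Real.sin b = 2 * Real.sin (b/2) * Real.cos (b/2) := by
    rw [← Real.sin_two_mul, ← hb]
  have hcb : Real.cos b = Real.cos (b/2) * Real.cos (b/2) - Real.sin (b/2) * Real.sin (b/2) := by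
    rw [← sq, ← sq, ← Real.cos_two_mul', ← hb]
  have h1 := Real.sin_sq_add_cos_sq (a/2)
  have h2 := Real.sin_sq_add_cos_sq (b/2)
  simp only [RZ, RX, e1, e2, uu, vv]
  generalize Real.sin (a/2) = sa at *
  generalize Real.cos (a/2) = ca at *
  generalize Real.sin (b/2) = sb at *
  generalize Real.cos (b/2) = cb at *
  cases p <;> simp only [hsa, hca, hsb, hcb] <;>
    apply Complex.ext <;>
    simp [Pauli.mat, Matrix.mul_apply, Fin.sum_univ_two] <;> try ring1
  · linear_combination (ca ^ 2 - sa ^ 2) * h2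
  · linear_combination (ca ^ 2 + sa ^ 2) * h2 + h1

lemma f_eq (n : ℕ) (P : Fin n → Pauli) (θ1 θ2 : Fin n → ℝ) :
    f n P θ1 θ2 = (∏ j, uu (P j) (θ1 j)) * ∏ j, vv (P j) (θ2 j) := by
  have key : (star (psi n θ1 θ2) ⬝ᵥ (ham n P *ᵥ psi n θ1 θ2))
      = ∏ j, ((uu (P j) (θ1 j) * vv (P j) (θ2 j) : ℝ) : ℂ) := by
    simp only [← single]
    simp only [dotProduct, mulVec, psi, ham, Matrix.of_apply, Pi.star_apply, star_prod,
      ← Finset.prod_mul_distrib]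
    rw [Finset.prod_univ_sum, Fintype.piFinset_univ]
    refine Finset.sum_congr rfl fun x _ => ?_
    rw [Finset.prod_mul_distrib, Finset.prod_univ_sum, Fintype.piFinset_univ]
  rw [f, key, ← Complex.ofReal_prod, Complex.ofReal_re, Finset.prod_mul_distrib]

lemma deriv_prod_update {n : ℕ} (g g' : Fin n → ℝ → ℝ) (i : Fin n)
    (h : ∀ a, HasDerivAt (g i) (g' i a) a) (θ : Fin n → ℝ) :
    HasDerivAt (fun t => ∏ j, g j (Function.update θ i t j))
      (∏ j, (if j = i then g' j else g j) (θ j)) (θ i) := by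
  have e : ∀ t, ∏ j, g j (Function.update θ i t j)
      = g i t * ∏ j ∈ Finset.univ.erase i, g j (θ j) := by
    intro t
    rw [← Finset.mul_prod_erase _ _ (Finset.mem_univ i)]
    simp only [Function.update_self]
    congr 1
    refine Finset.prod_congr rfl fun j hj => ?_
    rw [Function.update_of_ne (Finset.ne_of_mem_erase hj)]
  have e2 : ∏ j, (if j = i then g' j else g j) (θ j)
      = g' i (θ i) * ∏ j ∈ Finset.univ.erase i, g j (θ j) := by
    rw [← Finset.mul_prod_erase _ _ (Finset.mem_univ i)]
    simp only [if_true]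
    congr 1
    refine Finset.prod_congr rfl fun j hj => ?_
    rw [if_neg (Finset.ne_of_mem_erase hj)]
  simp only [e, e2]
  exact (h _).mul_const _

noncomputable def av (g : ℝ → ℝ) : ℝ :=
  (1 / (2 * Real.pi)) * ∫ t in Set.Icc (-Real.pi) Real.pi, g t

lemma av_nonneg (g : ℝ → ℝ) (h : ∀ t, 0 ≤ g t) : 0 ≤ av g := by
  have := Real.pi_pos
  exact mul_nonneg (by positivity) (integral_nonneg h)

lemma av_eq (g : ℝ → ℝ) : av g = (1 / (2 * Real.pi)) * ∫ t in (-Real.pi)..Real.pi, g t := by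
  rw [av, integral_Icc_eq_integral_Ioc,
    intervalIntegral.integral_of_le (by linarith [Real.pi_pos])]

lemma av_sin : av (fun t => Real.sin t ^ 2) = 1 / 2 := by
  have := Real.pi_pos
  rw [av_eq, integral_sin_sq]
  simp
  field_simp

lemma av_cos : av (fun t => Real.cos t ^ 2) = 1 / 2 := by
  have := Real.pi_pos
  rw [av_eq, integral_cos_sq]
  simp
  field_simp

lemma av_const (c : ℝ) : av (fun _ => c) = c := by
  have := Real.pi_pos
  rw [av_eq]
  simp
  field_simp
  ring

lemma pi_int {n : ℕ} (U : Fin n → ℝ → ℝ) :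
    ∫ x in (Set.univ.pi fun _ : Fin n => Set.Icc (-Real.pi) Real.pi), ∏ j, U j (x j)
      = ∏ j, ∫ t in Set.Icc (-Real.pi) Real.pi, U j t := by
  rw [volume_pi, Measure.restrict_pi_pi, integral_fintype_prod_eq_prod]

lemma avg_prod {n : ℕ} (U V : Fin n → ℝ → ℝ) :
    avg n (fun θ => (∏ j, U j (θ.1 j)) * ∏ j, V j (θ.2 j)) = ∏ j, (av (U j) * av (V j)) := by
  rw [avg, Measure.volume_eq_prod,
    setIntegral_prod_mul (fun x : Fin n → ℝ => ∏ j, U j (x j)) (fun x : Fin n → ℝ => ∏ j, V j (x j)),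
    pi_int, pi_int]
  simp only [av, Finset.prod_mul_distrib, Finset.prod_const, Finset.card_univ, Fintype.card_fin]
  generalize 2 * Real.pi = c
  rw [two_mul n, pow_add, _root_.one_div_pow]
  simp only [one_div, mul_inv]
  ring

lemma final {n : ℕ} (P : Fin n → Pauli) (U V : Fin n → ℝ → ℝ)
    (h : ∀ j, av (fun t => U j t ^ 2) * av (fun t => V j t ^ 2)
      ≤ if P j ≠ Pauli.I then 1 / 2 else 1) :
    avg n (fun θ => ((∏ j, U j (θ.1 j)) * ∏ j, V j (θ.2 j)) ^ 2)
      ≤ (1 / 2 : ℝ) ^ (Finset.univ.filter fun j => P j ≠ Pauli.I).card := by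
  simp only [mul_pow, ← Finset.prod_pow]
  rw [avg_prod (fun j t => U j t ^ 2) (fun j t => V j t ^ 2)]
  refine (Finset.prod_le_prod (fun j _ => mul_nonneg (av_nonneg _ fun t => sq_nonneg _)
    (av_nonneg _ fun t => sq_nonneg _)) fun j _ => h j).trans ?_
  rw [Finset.prod_ite]
  simp

lemma grad1 (n : ℕ) (P : Fin n → Pauli) (i : Fin n) : gradSq1 n P i =
    fun θ => ((∏ j, (if j = i then uu' (P j) else uu (P j)) (θ.1 j))
      * ∏ j, vv (P j) (θ.2 j)) ^ 2 := by
  funext θ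
  simp only [gradSq1, f_eq]
  rw [((deriv_prod_update (fun j => uu (P j)) (fun j => uu' (P j)) i
    (fun a => hasDeriv_uu _ a) θ.1).mul_const _).deriv]

lemma grad2 (n : ℕ) (P : Fin n → Pauli) (i : Fin n) : gradSq2 n P i =
    fun θ => ((∏ j, uu (P j) (θ.1 j))
      * ∏ j, (if j = i then vv' (P j) else vv (P j)) (θ.2 j)) ^ 2 := by
  funext θ
  simp only [gradSq2, f_eq]
  rw [((deriv_prod_update (fun j => vv (P j)) (fun j => vv' (P j)) i
    (fun a => hasDeriv_vv _ a) θ.2).const_mul _).deriv]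

/-- Gradient-variance bound for the single-layer Sim₁ ansatz: with `m` measured
(non-identity) qubits, the variance of every partial derivative is at most
`(1/2)^m`; in particular measuring `Θ(n)` qubits yields a barren plateau. -/
theorem sim1_gradient_variance_bound (n : ℕ) (hn : 1 ≤ n) (P : Fin n → Pauli) (i : Fin n)
    (m : ℕ) (hm : m = (Finset.univ.filter fun j => P j ≠ Pauli.I).card) :
    avg n (gradSq1 n P i) ≤ (1 / 2 : ℝ) ^ m ∧
    avg n (gradSq2 n P i) ≤ (1 / 2 : ℝ) ^ m := by
  subst hm
  rw [grad1, grad2]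
  constructor
  · refine final P (fun j => if j = i then uu' (P j) else uu (P j)) (fun j => vv (P j)) ?_
    intro j
    by_cases hj : j = i <;> simp only [hj, if_true, if_false] <;>
      rcases P _ <;> simp [uu, uu', vv, av_sin, av_cos, av_const] <;> norm_num
  · refine final P (fun j => uu (P j)) (fun j => if j = i then vv' (P j) else vv (P j)) ?_
    intro j
    by_cases hj : j = i <;> simp only [hj, if_true, if_false] <;>
      rcases P _ <;> simp [uu, vv', vv, av_sin, av_cos, av_const] <;> norm_num

end Sim1
end

section
/- Fix n ≥ 2. Let Had = (1/√2)·[[1,1],[1,−1]], let CZ_{j,j+1} denote the controlled-Z gate diag(1,1,1,−1) acting on qubits j and j+1, and let R_X(a) = [[cos(a/2), −i sin(a/2)],[−i sin(a/2), cos(a/2)]]. For θ ∈ ℝⁿ define the n-qubit unitary U(θ) = (⊗_{j=1}^{n} R_X(θ_j)) · (∏_{j=1}^{n−1} CZ_{j,j+1}) · Had^{⊗n} (the CZ gates pairwise commute), let ψ(θ) = U(θ)·|0…0⟩, and let f(θ) = ⟨ψ(θ), Z^{⊗n}·ψ(θ)⟩ where Z = [[1,0],[0,−1]]. Then for every i ∈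 {1,…,n}, the average of (∂f/∂θ_i)² over θ uniformly distributed on [−π,π]ⁿ is at most 1/2^{n−1}; in particular the Sim₉ ansatz has a barren plateau for H = Z^{⊗n}. -/
open Matrix Complex MeasureTheory

namespace Sim9

/-- The Hadamard gate. -/
noncomputable def Had : Matrix (Fin 2) (Fin 2) ℂ :=
  ((1 / Real.sqrt 2 : ℝ) : ℂ) • !![1, 1; 1, -1]

/-- The rotation gate `R_X(a)`. -/
noncomputable def RX (a : ℝ) : Matrix (Fin 2) (Fin 2) ℂ :=
  !![(Real.cos (a / 2) : ℂ), -Complex.I * (Real.sin (a / 2) : ℂ);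
     -Complex.I * (Real.sin (a / 2) : ℂ), (Real.cos (a / 2) : ℂ)]

/-- The Pauli `Z` matrix. -/
def Zmat : Matrix (Fin 2) (Fin 2) ℂ := !![1, 0; 0, -1]

/-- Tensor (Kronecker) product of `n` single-qubit gates, as a `2ⁿ×2ⁿ` matrix
indexed by bit strings. -/
noncomputable def tens (n : ℕ) (A : Fin n → Matrix (Fin 2) (Fin 2) ℂ) :
    Matrix (Fin n → Fin 2) (Fin n → Fin 2) ℂ :=
  Matrix.of fun x y => ∏ j, A j (x j) (y j)

/-- The diagonal of the controlled-Z gate acting on qubits `j` and `j+1`. -/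
noncomputable def CZdiag (n : ℕ) (j : Fin (n - 1)) : (Fin n → Fin 2) → ℂ := fun x =>
  if x ⟨j.1, Nat.lt_of_lt_of_le j.2 (Nat.sub_le n 1)⟩ = 1 ∧
     x ⟨j.1 + 1, by have := j.2; omega⟩ = 1 then -1 else 1

/-- The controlled-Z gate acting on qubits `j` and `j+1`. -/
noncomputable def CZpair (n : ℕ) (j : Fin (n - 1)) :
    Matrix (Fin n → Fin 2) (Fin n → Fin 2) ℂ :=
  Matrix.diagonal (CZdiag n j)

/-- The product `∏_{j=1}^{n−1} CZ_{j,j+1}` of the pairwise commuting (diagonal)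
controlled-Z gates on adjacent qubits. -/
noncomputable def CZchain (n : ℕ) : Matrix (Fin n → Fin 2) (Fin n → Fin 2) ℂ :=
  Matrix.diagonal fun x => ∏ j, CZdiag n j x

/-- A single layer of the Sim₉ ansatz:
`U(θ) = (⊗_j R_X(θ_j)) · (∏_j CZ_{j,j+1}) · Had^{⊗n}`. -/
noncomputable def U (n : ℕ) (θ : Fin n → ℝ) :
    Matrix (Fin n → Fin 2) (Fin n → Fin 2) ℂ :=
  tens n (fun j => RX (θ j)) * CZchain n * tens n (fun _ => Had)

/-- The all-zeros state `|0…0⟩`. -/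
def ket0 (n : ℕ) : (Fin n → Fin 2) → ℂ := fun x => if (∀ j, x j = 0) then 1 else 0

/-- The expectation value `f(θ) = ⟨ψ(θ), Z^{⊗n} ψ(θ)⟩` with `ψ(θ) = U(θ)|0…0⟩`. -/
noncomputable def f (n : ℕ) (θ : Fin n → ℝ) : ℝ :=
  (star (U n θ *ᵥ ket0 n) ⬝ᵥ (tens n (fun _ => Zmat) *ᵥ (U n θ *ᵥ ket0 n))).re

/-- Average of a function of the parameters `θ` uniformly distributed on `[−π,π]ⁿ`. -/
noncomputable def avg (n : ℕ) (g : (Fin n → ℝ) → ℝ) : ℝ :=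
  (1 / (2 * Real.pi) ^ n) *
    ∫ θ in (Set.univ.pi fun _ : Fin n => Set.Icc (-Real.pi) Real.pi), g θ

/-- sign character of a bit -/
noncomputable def sg (b : Fin 2) : ℂ := if b = 0 then 1 else -1

noncomputable def hh (b : Fin 2) (a : ℝ) : ℝ := if b = 0 then Real.cos a else Real.sin a
noncomputable def hd (b : Fin 2) (a : ℝ) : ℝ := if b = 0 then - Real.sin a else Real.cos a
noncomputable def ww (b : Fin 2) : ℂ := if b = 0 then 1 else Complex.I

lemma sg_add (a b : Fin 2) : sg (a + b) = sg a * sg b := by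
  fin_cases a <;> fin_cases b <;> simp [sg]

lemma sg_norm (a : Fin 2) : ‖sg a‖ = 1 := by
  fin_cases a <;> simp [sg]

lemma ww_norm (a : Fin 2) : ‖ww a‖ = 1 := by
  fin_cases a <;> simp [ww]

lemma sg_inj {a b : Fin 2} (h : sg a = sg b) : a = b := by
  have h1 : (1 : ℂ) ≠ -1 := by norm_num
  have h2 : (-1 : ℂ) ≠ 1 := by norm_num
  fin_cases a <;> fin_cases b <;> simp [sg, h1, h2] at h ⊢

lemma tens_mul (n : ℕ) (A B : Fin n → Matrix (Fin 2) (Fin 2) ℂ) :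
    tens n A * tens n B = tens n (fun j => A j * B j) := by
  ext x y
  simp only [tens, Matrix.mul_apply, Matrix.of_apply, ← Finset.prod_mul_distrib]
  rw [Finset.prod_univ_sum]
  simp [Fintype.piFinset_univ]

lemma tens_star (n : ℕ) (A : Fin n → Matrix (Fin 2) (Fin 2) ℂ) :
    (tens n A)ᴴ = tens n (fun j => (A j)ᴴ) := by
  ext x y
  simp [tens, Matrix.conjTranspose_apply]

lemma M_apply (a : ℝ) (s y : Fin 2) :
    ((RX a)ᴴ * Zmat * RX a) (y + s) y = (hh s a : ℂ) * (ww s * sg y) := by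
  have hc : Complex.cos a = Complex.cos (a/2) ^ 2 - Complex.sin (a/2) ^ 2 := by
    rw [← Complex.cos_two_mul']; congr 1; ring
  have hs : Complex.sin a = 2 * Complex.sin (a/2) * Complex.cos (a/2) := by
    rw [← Complex.sin_two_mul]; congr 1; ring
  have e1 : (starRingEnd ℂ) (Complex.cos (a/2)) = Complex.cos (a/2) := by
    have := Complex.conj_ofReal (Real.cos (a/2)); push_cast at this; exact this
  have e2 : (starRingEnd ℂ) (Complex.sin (a/2)) = Complex.sin (a/2) := by
    have := Complex.conj_ofReal (Real.sin (a/2)); push_cast at this; exact this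
  fin_cases s <;> fin_cases y <;>
    simp [hh, ww, sg, RX, Zmat, Matrix.mul_apply, Fin.sum_univ_two, hc, hs, e1, e2,
      Matrix.conjTranspose_apply] <;> ring_nf <;> simp <;> ring

noncomputable def GG (n : ℕ) (x : Fin n → Fin 2) : ℂ := ∏ j, CZdiag n j x

abbrev lo {n : ℕ} (j : Fin (n - 1)) : Fin n := ⟨j.1, Nat.lt_of_lt_of_le j.2 (Nat.sub_le n 1)⟩
abbrev hi {n : ℕ} (j : Fin (n - 1)) : Fin n := ⟨j.1 + 1, by have := j.2; omega⟩

lemma CZdiag_eq (n : ℕ) (j : Fin (n - 1)) (x : Fin n → Fin 2) :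
    CZdiag n j x = sg (x (lo j) * x (hi j)) := by
  unfold CZdiag
  change (if x (lo j) = 1 ∧ x (hi j) = 1 then (-1 : ℂ) else 1) = _
  generalize x (lo j) = a
  generalize x (hi j) = b
  fin_cases a <;> fin_cases b <;> simp [sg]

noncomputable def Phi (n : ℕ) (s y : Fin n → Fin 2) : ℂ :=
  (∏ j : Fin (n - 1), sg (s (lo j) * y (hi j) + y (lo j) * s (hi j))) * ∏ j, sg (y j)

lemma Phi_add (n : ℕ) (s y z : Fin n → Fin 2) : Phi n s (y + z) = Phi n s y * Phi n s z := by
  unfold Phi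
  rw [mul_mul_mul_comm, ← Finset.prod_mul_distrib, ← Finset.prod_mul_distrib]
  congr 1
  · refine Finset.prod_congr rfl fun j _ => ?_
    rw [← sg_add]; congr 1; simp only [Pi.add_apply]
    generalize y (lo j) = a
    generalize y (hi j) = b
    generalize s (lo j) = c
    generalize s (hi j) = d
    generalize z (lo j) = e
    generalize z (hi j) = g
    revert a b c d e g; decide
  · refine Finset.prod_congr rfl fun j _ => ?_
    rw [← sg_add]; rfl

lemma Phi_norm (n : ℕ) (s y : Fin n → Fin 2) : ‖Phi n s y‖ = 1 := by
  simp [Phi, sg_norm]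

lemma GG_norm (n : ℕ) (s : Fin n → Fin 2) : ‖GG n s‖ = 1 := by
  simp [GG, CZdiag_eq, sg_norm]

lemma GG_add (n : ℕ) (s y : Fin n → Fin 2) :
    GG n (y + s) * GG n y * ∏ j, sg (y j) = GG n s * Phi n s y := by
  unfold Phi GG
  rw [← mul_assoc]; congr 1
  rw [← Finset.prod_mul_distrib, ← Finset.prod_mul_distrib]
  refine Finset.prod_congr rfl fun j _ => ?_
  simp only [CZdiag_eq, ← sg_add, Pi.add_apply]
  congr 1
  generalize y (lo j) = a
  generalize y (hi j) = b
  generalize s (lo j) = c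
  generalize s (hi j) = d
  revert a b c d; decide

noncomputable def cc (n : ℕ) (s : Fin n → Fin 2) : ℂ :=
  (1 / 2) ^ n * (∏ j, ww (s j)) * GG n s * ∑ y, Phi n s y

lemma cc_norm (n : ℕ) (s : Fin n → Fin 2) : ‖cc n s‖ ≤ 1 := by
  unfold cc
  rw [norm_mul, norm_mul, norm_mul, GG_norm, norm_prod]
  simp only [ww_norm, Finset.prod_const_one, mul_one]
  have : ‖∑ y, Phi n s y‖ ≤ 2 ^ n := by
    refine (norm_sum_le _ _).trans ?_
    simp [Phi_norm]
  calc _ ≤ ‖((1:ℂ) / 2) ^ n‖ * 2 ^ n := by gcongr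
    _ = 1 := by simp

lemma cc_ne (n : ℕ) (s : Fin n → Fin 2) (h : cc n s ≠ 0) (e : Fin n → Fin 2) :
    Phi n s e = 1 := by
  by_contra hne
  apply h
  have : ∑ y, Phi n s y = Phi n s e * ∑ y, Phi n s y := by
    rw [Finset.mul_sum, ← Equiv.sum_comp (Equiv.addLeft e)]
    simp [Phi_add]
  have h2 : (Phi n s e - 1) * ∑ y, Phi n s y = 0 := by
    rw [sub_mul, ← this]; ring
  have h3 : ∑ y, Phi n s y = 0 := by
    rcases mul_eq_zero.1 h2 with h | h
    · exact absurd (sub_eq_zero.1 h) hne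
    · exact h
  simp [cc, h3]

lemma supp_inj (n : ℕ) (hn : 0 < n) (s t : Fin n → Fin 2) (hs : cc n s ≠ 0) (ht : cc n t ≠ 0)
    (h0 : s ⟨0, hn⟩ = t ⟨0, hn⟩) : s = t := by
  have key : ∀ k : ℕ, ∀ hk : k < n, s ⟨k, hk⟩ = t ⟨k, hk⟩ := by
    intro k
    induction k using Nat.strong_induction_on with
    | _ k ih =>
      intro hk
      rcases k with _ | k
      · exact h0
      · have hk' : k < n - 1 := by omega
        have h1 := cc_ne n s hs (Pi.single (lo ⟨k, hk'⟩) 1)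
        have h2 := cc_ne n t ht (Pi.single (lo ⟨k, hk'⟩) 1)
        have hP : ∀ y, ∏ j, sg ((y : Fin n → Fin 2) j) ≠ 0 := fun y => by
          rw [← norm_ne_zero_iff]; simp [sg_norm]
        have h3 := h1.trans h2.symm
        unfold Phi at h3
        have h4 := mul_right_cancel₀ (hP _) h3
        rw [← Finset.mul_prod_erase Finset.univ _ (Finset.mem_univ (⟨k, hk'⟩ : Fin (n-1))),
          ← Finset.mul_prod_erase Finset.univ
            (fun j => sg (t (lo j) * _ + _ * t (hi j))) (Finset.mem_univ (⟨k, hk'⟩ : Fin (n-1)))] at h4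
        have h5 : ∀ j ∈ Finset.univ.erase (⟨k, hk'⟩ : Fin (n-1)),
            sg (s (lo j) * (Pi.single (lo ⟨k, hk'⟩) 1 : Fin n → Fin 2) (hi j)
              + (Pi.single (lo ⟨k, hk'⟩) 1 : Fin n → Fin 2) (lo j) * s (hi j))
            = sg (t (lo j) * (Pi.single (lo ⟨k, hk'⟩) 1 : Fin n → Fin 2) (hi j)
              + (Pi.single (lo ⟨k, hk'⟩) 1 : Fin n → Fin 2) (lo j) * t (hi j)) := by
          intro j hj
          have hj' : j.1 ≠ k := fun h => (Finset.mem_erase.1 hj).1 (Fin.ext h)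
          have e1 : (Pi.single (lo ⟨k, hk'⟩) 1 : Fin n → Fin 2) (lo j) = 0 := by
            simp [Pi.single_apply, hj']
          rw [e1]
          by_cases hjk : j.1 + 1 = k
          · have := ih j.1 (by omega) (by omega)
            simp only [lo, this, zero_mul]
          · have e2 : (Pi.single (lo ⟨k, hk'⟩) 1 : Fin n → Fin 2) (hi j) = 0 := by
              simp [Pi.single_apply, hjk]
            simp [e2]
        rw [Finset.prod_congr rfl h5] at h4
        have h6 := mul_right_cancel₀ (by
          rw [← norm_ne_zero_iff]; simp [sg_norm]) h4
        have h7 := sg_inj h6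
        have e2 : (Pi.single (lo ⟨k, hk'⟩) 1 : Fin n → Fin 2) (hi ⟨k, hk'⟩) = 0 := by
          simp [Pi.single_apply]
        rw [e2, Pi.single_eq_same] at h7
        simpa using h7
  funext j
  exact key j.1 j.2

lemma sum_sq_le (n : ℕ) (hn : 0 < n) : ∑ s, ((cc n s).re) ^ 2 ≤ 2 := by
  classical
  have h1 : ∑ s, ((cc n s).re) ^ 2 = ∑ s with cc n s ≠ 0, ((cc n s).re) ^ 2 := by
    symm
    apply Finset.sum_filter_of_ne
    intro s _ h h0
    simp [h0] at h
  rw [h1]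
  have h2 : (Finset.univ.filter (fun s => cc n s ≠ 0)).card ≤ 2 := by
    have := Finset.card_le_card_of_injOn (s := Finset.univ.filter (fun s => cc n s ≠ 0))
      (t := (Finset.univ : Finset (Fin 2))) (fun s => s ⟨0, hn⟩) (by simp) (by
        intro s hs t ht h
        simp only [Finset.coe_filter, Finset.mem_univ, true_and, Set.mem_ofPred_eq] at hs ht
        exact supp_inj n hn s t hs ht h)
    simpa using this
  calc _ ≤ ∑ s with cc n s ≠ 0, (1 : ℝ) := by
        refine Finset.sum_le_sum fun s _ => ?_
        rw [sq_le_one_iff_abs_le_one]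
        exact (Complex.abs_re_le_norm _).trans (cc_norm n s)
    _ ≤ 2 := by
        simp only [Finset.sum_const, nsmul_eq_mul, mul_one]
        exact_mod_cast h2

lemma had_ket (n : ℕ) : tens n (fun _ => Had) *ᵥ ket0 n = fun _ => ((1 / Real.sqrt 2 : ℝ) : ℂ) ^ n := by
  funext y
  have : ∀ x : Fin n → Fin 2, (∀ j, x j = 0) ↔ x = 0 := fun x => by
    rw [funext_iff]; rfl
  simp only [Matrix.mulVec, dotProduct, ket0, this]
  simp only [mul_ite, mul_one, mul_zero, Finset.sum_ite_eq', Finset.mem_univ, if_true]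
  have h : ∀ b : Fin 2, Had b 0 = ((1 / Real.sqrt 2 : ℝ) : ℂ) := by
    intro b; fin_cases b <;> simp [Had]
  simp only [tens, Matrix.of_apply, Pi.zero_apply, h]
  simp

lemma f_eq (n : ℕ) (θ : Fin n → ℝ) :
    f n θ = ∑ s, (cc n s).re * ∏ j, hh (s j) (θ j) := by
  set v : (Fin n → Fin 2) → ℂ := fun y => GG n y * ((1 / Real.sqrt 2 : ℝ) : ℂ) ^ n with hv
  have hU : U n θ *ᵥ ket0 n = tens n (fun j => RX (θ j)) *ᵥ v := by
    unfold U
    rw [← Matrix.mulVec_mulVec, ← Matrix.mulVec_mulVec, had_ket]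
    congr 1
    funext y
    simp [CZchain, Matrix.mulVec_diagonal, hv, GG]
  have hstar : ∀ y, star (v y) = v y := by
    intro y
    have : ∀ b, star (sg b) = sg b := by intro b; fin_cases b <;> simp [sg]
    have hG : star (GG n y) = GG n y := by
      simp only [GG, CZdiag_eq, star_prod, this]
    simp only [hv, star_mul', hG, star_pow]
    congr 2
    exact Complex.conj_ofReal _
  have hsq : ((1 / Real.sqrt 2 : ℝ) : ℂ) ^ n * ((1 / Real.sqrt 2 : ℝ) : ℂ) ^ n = (1 / 2) ^ n := by
    rw [← mul_pow]; congr 1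
    rw [← Complex.ofReal_mul]
    have : (1 / Real.sqrt 2) * (1 / Real.sqrt 2) = 1 / 2 := by
      rw [div_mul_div_comm, Real.mul_self_sqrt (by norm_num)]; norm_num
    rw [this]; norm_num
  have hmain : star (U n θ *ᵥ ket0 n) ⬝ᵥ (tens n (fun _ => Zmat) *ᵥ (U n θ *ᵥ ket0 n))
      = ∑ s, cc n s * ((∏ j, hh (s j) (θ j) : ℝ) : ℂ) := by
    rw [hU, Matrix.star_mulVec, ← Matrix.dotProduct_mulVec, Matrix.mulVec_mulVec,
      Matrix.mulVec_mulVec, tens_star, tens_mul, tens_mul]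
    simp only [dotProduct, Matrix.mulVec, Pi.star_apply, hstar, Finset.mul_sum]
    rw [Finset.sum_comm]
    have : ∀ y : Fin n → Fin 2, ∀ F : (Fin n → Fin 2) → ℂ, ∑ x, F x = ∑ s, F (y + s) := by
      intro y F
      exact (Equiv.sum_comp (Equiv.addLeft y) F).symm
    simp_rw [fun y : Fin n → Fin 2 => this y (fun x => v x * (tens n (fun j => (RX (θ j))ᴴ * Zmat * RX (θ j)) x y * v y))]
    rw [Finset.sum_comm]
    refine Finset.sum_congr rfl fun s _ => ?_
    simp only [cc]
    rw [Finset.mul_sum, Finset.sum_mul]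
    refine Finset.sum_congr rfl fun y _ => ?_
    simp only [tens, Matrix.of_apply, Pi.add_apply, M_apply, Finset.prod_mul_distrib, hv]
    rw [Complex.ofReal_prod, ← hsq]
    linear_combination (((1 / Real.sqrt 2 : ℝ) : ℂ) ^ n * ((1 / Real.sqrt 2 : ℝ) : ℂ) ^ n *
      (∏ j, ww (s j)) * ∏ j, (hh (s j) (θ j) : ℂ)) * GG_add n s y
  unfold f
  rw [hmain, Complex.re_sum]
  refine Finset.sum_congr rfl fun s _ => ?_
  rw [Complex.re_mul_ofReal]

noncomputable def HH {n : ℕ} (i j : Fin n) (b : Fin 2) (a : ℝ) : ℝ :=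
  if j = i then hd b a else hh b a

lemma HH_cont {n : ℕ} (i j : Fin n) (b : Fin 2) : Continuous (HH i j b) := by
  unfold HH hd hh
  split_ifs <;> fun_prop

lemma hh_deriv (b : Fin 2) (a : ℝ) : HasDerivAt (hh b) (hd b a) a := by
  fin_cases b
  · have : hh 0 = Real.cos := by funext x; simp [hh]
    simpa [this, hd] using Real.hasDerivAt_cos a
  · have : hh 1 = Real.sin := by funext x; simp [hh]
    simpa [this, hd] using Real.hasDerivAt_sin a

lemma HH_int {n : ℕ} (i j : Fin n) (b b' : Fin 2) :
    ∫ a in Set.Icc (-Real.pi) Real.pi, HH i j b a * HH i j b' a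
      = if b = b' then Real.pi else 0 := by
  rw [integral_Icc_eq_integral_Ioc, ← intervalIntegral.integral_of_le (by linarith [Real.pi_pos])]
  have e1 : ∫ x in (-Real.pi)..Real.pi, Real.cos x * Real.cos x = Real.pi := by
    simp_rw [← pow_two]; rw [integral_cos_sq]; simp
  have e2 : ∫ x in (-Real.pi)..Real.pi, Real.sin x * Real.sin x = Real.pi := by
    simp_rw [← pow_two]; rw [integral_sin_sq]; simp
  have e3 : ∫ x in (-Real.pi)..Real.pi, Real.sin x * Real.cos x = 0 := by
    rw [integral_sin_mul_cos₁]; simp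
  have e4 : ∫ x in (-Real.pi)..Real.pi, Real.cos x * Real.sin x = 0 := by
    simp_rw [mul_comm (Real.cos _)]; exact e3
  unfold HH hd hh
  by_cases h : j = i <;> fin_cases b <;> fin_cases b' <;> simp [h, e1, e2, e3, e4]

lemma f_deriv (n : ℕ) (i : Fin n) (θ : Fin n → ℝ) :
    deriv (fun t => f n (Function.update θ i t)) (θ i)
      = ∑ s, (cc n s).re * ∏ j, HH i j (s j) (θ j) := by
  have h1 : (fun t => f n (Function.update θ i t)) = fun t => ∑ s, (cc n s).re *
      (hh (s i) t * ∏ j ∈ Finset.univ.erase i, hh (s j) (θ j)) := by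
    funext t
    rw [f_eq]
    refine Finset.sum_congr rfl fun s _ => ?_
    rw [← Finset.mul_prod_erase Finset.univ _ (Finset.mem_univ i), Function.update_self]
    congr 2
    refine Finset.prod_congr rfl fun j hj => ?_
    rw [Function.update_of_ne (Finset.mem_erase.1 hj).1]
  rw [h1]
  apply HasDerivAt.deriv
  have h2 : ∀ s : Fin n → Fin 2, ∏ j, HH i j (s j) (θ j)
      = hd (s i) (θ i) * ∏ j ∈ Finset.univ.erase i, hh (s j) (θ j) := by
    intro s
    rw [← Finset.mul_prod_erase Finset.univ _ (Finset.mem_univ i)]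
    congr 1
    · simp [HH]
    · refine Finset.prod_congr rfl fun j hj => ?_
      simp [HH, (Finset.mem_erase.1 hj).1]
  simp only [h2]
  apply HasDerivAt.fun_sum
  intro s _
  exact ((hh_deriv (s i) (θ i)).mul_const _).const_mul _

lemma pi_int (n : ℕ) (i : Fin n) (s t : Fin n → Fin 2) :
    ∫ θ in (Set.univ.pi fun _ : Fin n => Set.Icc (-Real.pi) Real.pi),
      (∏ j, HH i j (s j) (θ j)) * ∏ j, HH i j (t j) (θ j)
      = if s = t then Real.pi ^ n else 0 := by
  simp_rw [← Finset.prod_mul_distrib]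
  rw [volume_pi, Measure.restrict_pi_pi]
  rw [integral_fintype_prod_eq_prod (𝕜 := ℝ) (fun j a => HH i j (s j) a * HH i j (t j) a)]
  simp only [HH_int]
  split_ifs with h
  · simp [h]
  · obtain ⟨j, hj⟩ := Function.ne_iff.1 h
    exact Finset.prod_eq_zero (Finset.mem_univ j) (by simp [hj])

/-- The single-layer Sim₉ ansatz has a barren plateau for `H = Z^{⊗n}`: the
gradient variance is at most `1/2^{n−1}`. -/
theorem sim9_barren_plateau (n : ℕ) (hn : 2 ≤ n) (i : Fin n) :
    avg n (fun θ => (deriv (fun t => f n (Function.update θ i t)) (θ i)) ^ 2) ≤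
      1 / 2 ^ (n - 1) := by
  simp only [f_deriv]
  unfold avg
  have hcomp : IsCompact (Set.univ.pi fun _ : Fin n => Set.Icc (-Real.pi) Real.pi) :=
    isCompact_univ_pi fun _ => isCompact_Icc
  have hcont : ∀ s : Fin n → Fin 2, Continuous fun θ : Fin n → ℝ => ∏ j, HH i j (s j) (θ j) :=
    fun s => continuous_finsetProd _ fun j _ => (HH_cont i j (s j)).comp (continuous_apply j)
  have hI : ∫ θ in (Set.univ.pi fun _ : Fin n => Set.Icc (-Real.pi) Real.pi),
      (∑ s, (cc n s).re * ∏ j, HH i j (s j) (θ j)) ^ 2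
      = Real.pi ^ n * ∑ s, ((cc n s).re) ^ 2 := by
    simp_rw [pow_two, Finset.sum_mul_sum]
    rw [integral_finsetSum]
    · rw [Finset.mul_sum]
      refine Finset.sum_congr rfl fun s _ => ?_
      rw [integral_finsetSum]
      · simp_rw [mul_mul_mul_comm, integral_const_mul, pi_int]
        simp [mul_comm]
      · intro t _
        exact (((hcont s).const_mul _).mul ((hcont t).const_mul _)).continuousOn.integrableOn_compact
          hcomp
    · intro s _
      refine integrable_finsetSum _ fun t _ => ?_
      exact (((hcont s).const_mul _).mul ((hcont t).const_mul _)).continuousOn.integrableOn_compact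
          hcomp
  rw [hI]
  have hS := sum_sq_le n (by omega)
  have hpi : Real.pi ^ n ≠ 0 := pow_ne_zero _ Real.pi_pos.ne'
  have h2 : (2 : ℝ) ^ n = 2 * 2 ^ (n - 1) := by
    rw [← pow_succ']; congr 1; omega
  calc _ = (1 / 2 ^ n) * ∑ s, ((cc n s).re) ^ 2 := by
        rw [mul_pow]; field_simp
    _ ≤ (1 / 2 ^ n) * 2 := by gcongr
    _ = 1 / 2 ^ (n - 1) := by rw [h2]; field_simp

end Sim9
end

section
/- Define sequences a, b : ℕ → ℝ by a(0) = 1/2, b(0) = 0, a(l+1) = (3·a(l) − b(l))/4, and b(l+1) = (b(l) − a(l))/2. Then for every l ∈ ℕ, a(l) = (2·4^l + 1)/(6·4^l) and b(l) = −(4^l − 1)/(3·4^l). -/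
/-- Closed form for the recurrence arising in the multi-layer barren-plateau
analysis of the IQP₁ ansatz. -/
theorem iqp1_recurrence_closed_form (a b : ℕ → ℝ)
    (ha0 : a 0 = 1 / 2) (hb0 : b 0 = 0)
    (ha : ∀ l, a (l + 1) = (3 * a l - b l) / 4)
    (hb : ∀ l, b (l + 1) = (b l - a l) / 2) :
    ∀ l, a l = (2 * 4 ^ l + 1) / (6 * 4 ^ l) ∧ b l = -((4 ^ l - 1) / (3 * 4 ^ l)) := by
  intro l
  induction l with
  | zero => rw [ha0, hb0]; norm_num
  | succ k ih =>
    obtain ⟨h1, h2⟩ := ih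
    have h4 : (4 : ℝ) ^ k ≠ 0 := by positivity
    rw [ha, hb, h1, h2, pow_succ]
    generalize (4 : ℝ) ^ k = x at h4
    constructor <;> field_simp <;> ring
end

section
/- Define sequences a, b : ℕ → ℝ by a(0) = 1/2, b(0) = 0, a(l+1) = (3·a(l) − b(l))/4, and b(l+1) = (b(l) − a(l))/2. Then for every l ≥ 1, (a(l−1) − b(l−1))/2 = (4^l − 1)/(3·4^l). -/
/-- Closed form for the even-layer gradient variance of the IQP₁ ansatz. -/
theorem iqp1_even_layer_closed_form (a b : ℕ → ℝ)
    (ha0 : a 0 = 1 / 2) (hb0 : b 0 = 0)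
    (ha : ∀ l, a (l + 1) = (3 * a l - b l) / 4)
    (hb : ∀ l, b (l + 1) = (b l - a l) / 2) :
    ∀ l : ℕ, 1 ≤ l → (a (l - 1) - b (l - 1)) / 2 = (4 ^ l - 1) / (3 * 4 ^ l) := by
  have key : ∀ l, a l - b l / 2 = 1 / 2 ∧ (a l + b l) * 4 ^ l = 1 / 2 := by
    intro l
    induction l with
    | zero => rw [ha0, hb0]; norm_num
    | succ k ih =>
      obtain ⟨h1, h2⟩ := ih
      rw [ha, hb, pow_succ]
      constructor
      · linarith
      · linear_combination h2
  intro l hl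
  obtain ⟨k, rfl⟩ : ∃ k, l = k + 1 := ⟨l - 1, by omega⟩
  obtain ⟨h1, h2⟩ := key k
  have h4 : (4 : ℝ) ^ k ≠ 0 := by positivity
  rw [Nat.add_sub_cancel, pow_succ, eq_div_iff (by positivity)]
  linear_combination 8 * 4 ^ k * h1 - 2 * h2
end

section
/- Define sequences a, b : ℕ → ℝ by a(0) = 1/2, b(0) = 0, a(l+1) = (3·a(l) − b(l))/4, and b(l+1) = (b(l) − a(l))/2. Then a(l) converges to 1/3 and b(l) converges to −1/3 as l → ∞. In particular, the gradient variance of the IQP₁ ansatz is, in absolute value, bounded below by a positive constant independent of the number of layers, so no barren plateau appears. -/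
open Filter

/-- The gradient-variance sequences of the IQP₁ ansatz converge to ±1/3;
in particular no barren plateau appears. -/
theorem iqp1_variance_converges (a b : ℕ → ℝ)
    (ha0 : a 0 = 1 / 2) (hb0 : b 0 = 0)
    (ha : ∀ l, a (l + 1) = (3 * a l - b l) / 4)
    (hb : ∀ l, b (l + 1) = (b l - a l) / 2) :
    Tendsto a atTop (nhds (1 / 3)) ∧ Tendsto b atTop (nhds (-(1 / 3))) := by
  have key : ∀ l, a l = 1 / 3 + 1 / 6 * (1 / 4 : ℝ) ^ l ∧
      b l = -(1 / 3) + 1 / 3 * (1 / 4 : ℝ) ^ l := by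
    intro l
    induction l with
    | zero => rw [ha0, hb0]; norm_num
    | succ n ih =>
      obtain ⟨h1, h2⟩ := ih
      rw [ha, hb, h1, h2, pow_succ]
      constructor <;> ring
  have hp : Tendsto (fun l : ℕ => (1 / 4 : ℝ) ^ l) atTop (nhds 0) :=
    tendsto_pow_atTop_nhds_zero_of_lt_one (by norm_num) (by norm_num)
  constructor
  · rw [funext fun l => (key l).1]
    simpa using (hp.const_mul (1 / 6 : ℝ)).const_add (1 / 3 : ℝ)
  · rw [funext fun l => (key l).2]
    simpa using (hp.const_mul (1 / 3 : ℝ)).const_add (-(1 / 3) : ℝ)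
end

section
/- Let m, n ∈ ℕ and for α ∈ ℝ let S(α) be the 2^m × 2^n complex matrix (rows indexed by {0,1}^m, columns by {0,1}^n) whose (x,y) entry is 1 if x and y are both the all-zeros string, e^{iα} if x and y are both the all-ones string, and 0 otherwise. Let f : ℝ → ℝ be differentiable. Then for every θ ∈ ℝ, each entry of the matrix-valued function θ ↦ e^{−i·f(θ)/2} · S(f(θ)) is differentiable with derivative equal to the corresponding entry of −(i·f′(θ)/2) · e^{−i·f(θ)/2} · S(f(θ) + π). -/
open Complex

/-- The matrix of a green spider of the ZX-calculus with `n` inputs, `m` outputs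
and phase `α`: `|0…0⟩⟨0…0| + e^{iα} |1…1⟩⟨1…1|`. -/
noncomputable def greenSpider (m n : ℕ) (α : ℝ) :
    Matrix (Fin m → Fin 2) (Fin n → Fin 2) ℂ :=
  Matrix.of fun x y =>
    if (∀ i, x i = 0) ∧ (∀ j, y j = 0) then 1
    else if (∀ i, x i = 1) ∧ (∀ j, y j = 1) then Complex.exp (I * α)
    else 0

/-- The phase-corrected spider differentiation lemma: differentiating the
phase-corrected spider `e^{−if(θ)/2} S(f(θ))` corresponds to adding `π` to the
spider phase. -/
theorem spider_differentiation (m n : ℕ) (f : ℝ → ℝ) (hf : Differentiable ℝ f)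
    (θ : ℝ) (x : Fin m → Fin 2) (y : Fin n → Fin 2) :
    HasDerivAt
      (fun t : ℝ => Complex.exp (-(I * f t) / 2) * greenSpider m n (f t) x y)
      (-(I * deriv f θ / 2) * Complex.exp (-(I * f θ) / 2) *
        greenSpider m n (f θ + Real.pi) x y) θ := by
  have hc : HasDerivAt (fun t : ℝ => (f t : ℂ)) ((deriv f θ : ℝ) : ℂ) θ :=
    (hf θ).hasDerivAt.ofReal_comp
  have h1 : HasDerivAt (fun t : ℝ => Complex.exp (-(I * f t) / 2))
      (Complex.exp (-(I * f θ) / 2) * (-(I * (deriv f θ : ℝ)) / 2)) θ :=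
    (((hc.const_mul I).neg).div_const 2).cexp
  simp only [greenSpider, Matrix.of_apply]
  split_ifs with h h'
  · refine (h1.mul_const (1 : ℂ)).congr_deriv ?_
    ring
  · have h2 : HasDerivAt (fun t : ℝ => Complex.exp (I * f t))
        (Complex.exp (I * f θ) * (I * (deriv f θ : ℝ))) θ := (hc.const_mul I).cexp
    have h3 : Complex.exp (I * ((f θ + Real.pi : ℝ) : ℂ)) = -Complex.exp (I * f θ) := by
      rw [Complex.ofReal_add, mul_add, Complex.exp_add, mul_comm I (Real.pi : ℂ),
        Complex.exp_pi_mul_I]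
      ring
    rw [h3]
    refine (h1.mul h2).congr_deriv ?_
    ring
  · refine (h1.mul_const (0 : ℂ)).congr_deriv ?_
    ring
end
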